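/- Let G_M(g) be the presented group with generators σ_1,…,σ_g and defining relations: σ_kσ_j = σ_jσ_k for |k−j| > 1; σ_jσ_{j+1}σ_j = σ_{j+1}σ_jσ_{j+1} for j = 1,…,g−1; σ_1σ_2⋯σ_{g−1}σ_g²σ_{g−1}⋯σ_2σ_1 = 1; and (σ_1σ_2⋯σ_g)^{g+1} = 1. Let p : G_M(g) → Sym({1,…,g+1}) be the homomorphism sending σ_i to the transposition (i, i+1) (the relations are satisfied in the symmetric group, so p is well defined). Then for g ≥ 3 the natural homomorphism G_A(g) → G_M(g) sending σ_i to σ_i for i = 1,…,g−1 is injective, and its image equals the preimage p^{−1}(Stab(g+1)) of the stabilizer of the point g+1; in particular this image is a subgroup of index g+1 in G_M(g). -/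

import Mathlib

open FreeGroup in
/-- Relations (A1)-(A3) of the group `G_A(g)`.
Index `i : Fin (g-1)` corresponds to the generator `σ_{i+1}`. -/
def relsA (g : ℕ) : Set (FreeGroup (Fin (g-1))) :=
  {r | ∃ j k : Fin (g-1), ((j : ℕ) + 1 < k ∨ (k : ℕ) + 1 < j) ∧
        r = of k * of j * (of j * of k)⁻¹} ∪
  {r | ∃ j k : Fin (g-1), (j : ℕ) + 1 = k ∧
        r = of j * of k * of j * (of k * of j * of k)⁻¹} ∪
  {(List.ofFn (fun i : Fin (g-1) => of i)).prod ^ g}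

/-- `G_A(g)`. -/
def GA (g : ℕ) : Type := PresentedGroup (relsA g)

instance (g : ℕ) : Group (GA g) := by unfold GA; infer_instance

open FreeGroup in
/-- Magnus' relations for the mapping class group of the `(g+1)`-punctured sphere.
Index `i : Fin g` corresponds to the generator `σ_{i+1}`. The third relation is
`σ_1 ⋯ σ_{g-1} σ_g² σ_{g-1} ⋯ σ_1 = (σ_1 ⋯ σ_g)(σ_g ⋯ σ_1) = 1`. -/
def relsM (g : ℕ) : Set (FreeGroup (Fin g)) :=
  {r | ∃ j k : Fin g, ((j : ℕ) + 1 < k ∨ (k : ℕ) + 1 < j) ∧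
        r = of k * of j * (of j * of k)⁻¹} ∪
  {r | ∃ j k : Fin g, (j : ℕ) + 1 = k ∧
        r = of j * of k * of j * (of k * of j * of k)⁻¹} ∪
  {(List.ofFn (fun i : Fin g => of i)).prod *
      ((List.ofFn (fun i : Fin g => of i)).reverse).prod} ∪
  {(List.ofFn (fun i : Fin g => of i)).prod ^ (g+1)}

/-- `G_M(g)`, Magnus' presentation of the mapping class group of the `(g+1)`-punctured
sphere. -/
def GM (g : ℕ) : Type := PresentedGroup (relsM g)

instance (g : ℕ) : Group (GM g) := by unfold GM; infer_instance

section BraidAux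

variable {G : Type*} [Group G]

/-- Braid relations for `s 0, …, s (m-1)`. -/
structure Br (s : ℕ → G) (m : ℕ) : Prop where
  comm : ∀ i k, i + 1 < k → k < m → s i * s k = s k * s i
  braid : ∀ i, i + 1 < m → s i * s (i+1) * s i = s (i+1) * s i * s (i+1)

/-- `s 0 * ⋯ * s (k-1)` -/
def PP (s : ℕ → G) : ℕ → G
  | 0 => 1
  | k+1 => PP s k * s k

/-- `s (k-1) * ⋯ * s 0` -/
def DD (s : ℕ → G) : ℕ → G
  | 0 => 1
  | k+1 => s k * DD s k

theorem PP_map {G' : Type*} [Group G'] (f : G →* G') (s : ℕ → G) (k : ℕ) :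
    f (PP s k) = PP (fun i => f (s i)) k := by
  induction k with
  | zero => simp [PP]
  | succ k ih => simp [PP, ih]

theorem DD_map {G' : Type*} [Group G'] (f : G →* G') (s : ℕ → G) (k : ℕ) :
    f (DD s k) = DD (fun i => f (s i)) k := by
  induction k with
  | zero => simp [DD]
  | succ k ih => simp [DD, ih]

theorem PP_congr {s t : ℕ → G} {k : ℕ} (h : ∀ i < k, s i = t i) : PP s k = PP t k := by
  induction k with
  | zero => rfl
  | succ k ih => simp only [PP]; rw [ih fun i hi => h i (by omega), h k (by omega)]

theorem DD_congr {s t : ℕ → G} {k : ℕ} (h : ∀ i < k, s i = t i) : DD s k = DD t k := by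
  induction k with
  | zero => rfl
  | succ k ih => simp only [DD]; rw [ih fun i hi => h i (by omega), h k (by omega)]

theorem ofFn_prod (s : ℕ → G) (k : ℕ) : (List.ofFn (fun i : Fin k => s i)).prod = PP s k := by
  induction k with
  | zero => simp [PP]
  | succ k ih =>
    rw [List.ofFn_succ_last]
    simp [PP, ← ih]

theorem ofFn_reverse_prod (s : ℕ → G) (k : ℕ) :
    (List.ofFn (fun i : Fin k => s i)).reverse.prod = DD s k := by
  induction k with
  | zero => simp [DD]
  | succ k ih =>
    rw [List.ofFn_succ_last]
    simp [DD, ← ih]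

theorem PP_op (s : ℕ → G) (k : ℕ) :
    PP (fun i => MulOpposite.op (s i)) k = MulOpposite.op (DD s k) := by
  induction k with
  | zero => simp [PP, DD]
  | succ k ih => simp [PP, DD, ih]

theorem DD_op (s : ℕ → G) (k : ℕ) :
    DD (fun i => MulOpposite.op (s i)) k = MulOpposite.op (PP s k) := by
  induction k with
  | zero => simp [PP, DD]
  | succ k ih => simp [PP, DD, ih]

variable {s : ℕ → G} {m : ℕ}

theorem Br.op (h : Br s m) : Br (fun i => MulOpposite.op (s i)) m where
  comm i k h1 h2 := by
    simp only [← MulOpposite.op_mul]; rw [h.comm i k h1 h2]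
  braid i h1 := by
    simp only [← MulOpposite.op_mul]; rw [← mul_assoc, ← mul_assoc, h.braid i h1]

theorem Br.mono (h : Br s m) {n : ℕ} (hn : n ≤ m) : Br s n where
  comm i k h1 h2 := h.comm i k h1 (by omega)
  braid i h1 := h.braid i (by omega)

theorem Br.map {G' : Type*} [Group G'] (h : Br s m) (f : G →* G') : Br (fun i => f (s i)) m where
  comm i k h1 h2 := by simp only [← map_mul]; rw [h.comm i k h1 h2]
  braid i h1 := by simp only [← map_mul]; rw [h.braid i h1]

theorem Br.PP_comm (h : Br s m) (k i : ℕ) (hk : k < i) (hi : i < m) :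
    PP s k * s i = s i * PP s k := by
  induction k with
  | zero => simp [PP]
  | succ k ih =>
    simp only [PP]
    rw [mul_assoc, h.comm k i hk hi, ← mul_assoc, ih (by omega), mul_assoc]

theorem Br.PP_shift (h : Br s m) (k i : ℕ) (hk : k ≤ m) (hi : i + 1 < k) :
    PP s k * s i = s (i+1) * PP s k := by
  induction k with
  | zero => omega
  | succ k ih =>
    rcases Nat.lt_or_ge (i+1) k with h1 | h1
    · simp only [PP]
      rw [mul_assoc, ← h.comm i k h1 (by omega), ← mul_assoc, ih (by omega) h1, mul_assoc]
    · obtain rfl : k = i + 1 := by omega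
      simp only [PP]
      rw [mul_assoc, mul_assoc, ← mul_assoc (s i), h.braid i (by omega), ← mul_assoc, ← mul_assoc,
        h.PP_comm i (i+1) (by omega) (by omega)]
      simp only [mul_assoc]

theorem Br.DD_shift (h : Br s m) (k i : ℕ) (hk : k ≤ m) (hi : i + 1 < k) :
    DD s k * s (i+1) = s i * DD s k := by
  have := h.op.PP_shift k i hk hi
  rw [PP_op, ← MulOpposite.op_mul, ← MulOpposite.op_mul] at this
  exact (MulOpposite.op_injective this).symm

/-- `s₀ P_k P_j = P_{j+1} P_k` -/
theorem Br.PP_PP (h : Br s m) (k j : ℕ) (hk : k ≤ m) (hj : j < k) :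
    s 0 * PP s k * PP s j = PP s (j+1) * PP s k := by
  induction j with
  | zero => simp [PP]
  | succ j ih =>
    rw [show PP s (j+1+1) = PP s (j+1) * s (j+1) from rfl, mul_assoc (PP s (j+1)),
      ← h.PP_shift k j hk hj, ← mul_assoc, ← ih (by omega)]
    simp only [PP, mul_assoc]

/-- `P_k D_j = D_{j+1} s₀⁻¹ P_k` -/
theorem Br.PP_DD (h : Br s m) (k j : ℕ) (hk : k ≤ m) (hj : j < k) :
    PP s k * DD s j = DD s (j+1) * (s 0)⁻¹ * PP s k := by
  induction j with
  | zero => simp [DD]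
  | succ j ih =>
    rw [show DD s (j+1) = s j * DD s j from rfl, ← mul_assoc, h.PP_shift k j hk hj, mul_assoc,
      ih (by omega)]
    simp only [DD, mul_assoc]

theorem Br.PP_pow_aux (h : Br s m) (n : ℕ) (hn : n + 1 ≤ m) (k : ℕ) (hk : k ≤ n + 1) :
    PP s (n+1) ^ k * DD s (n+1-k) = PP s n ^ k * DD s (n+1) := by
  induction k with
  | zero => simp
  | succ k ih =>
    have ih := ih (by omega)
    have e : n + 1 - k = (n - k) + 1 := by omega
    have e' : n + 1 - (k+1) = n - k := by omega
    rw [e] at ih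
    rw [e', pow_succ, mul_assoc, h.PP_DD (n+1) (n-k) hn (by omega), ← mul_assoc, ← mul_assoc, ih,
      pow_succ, mul_assoc, mul_assoc, ← mul_assoc (DD s (n+1)), ← h.PP_DD (n+1) n hn (by omega)]
    simp only [PP, DD, mul_assoc]

theorem Br.PP_pow (h : Br s m) (n : ℕ) (hn : n + 1 ≤ m) :
    PP s (n+1) ^ (n+2) = PP s n ^ (n+1) * (DD s (n+1) * PP s (n+1)) := by
  have := h.PP_pow_aux n hn (n+1) le_rfl
  simp only [Nat.sub_self, DD, mul_one] at this
  rw [pow_succ, this]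
  simp only [DD, mul_assoc]

theorem Br.DD_pow (h : Br s m) (n : ℕ) (hn : n + 1 ≤ m) :
    DD s (n+1) ^ (n+2) = (DD s (n+1) * PP s (n+1)) * DD s n ^ (n+1) := by
  have := h.op.PP_pow n hn
  simp only [PP_op, DD_op, ← MulOpposite.op_mul, ← MulOpposite.op_pow] at this
  exact MulOpposite.op_injective this

theorem Commute.PP_right {x : G} (k : ℕ) (h : ∀ i < k, Commute x (s i)) : Commute x (PP s k) := by
  induction k with
  | zero => exact Commute.one_right _
  | succ k ih => exact (ih fun i hi => h i (by omega)).mul_right (h k (by omega))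

theorem Commute.DD_right {x : G} (k : ℕ) (h : ∀ i < k, Commute x (s i)) : Commute x (DD s k) := by
  induction k with
  | zero => exact Commute.one_right _
  | succ k ih => exact (h k (by omega)).mul_right (ih fun i hi => h i (by omega))

theorem Br.DP_comm (h : Br s m) (n i : ℕ) (hn : n ≤ m) (hi : i + 1 < n) :
    Commute (DD s n * PP s n) (s i) := by
  show _ * _ = _ * _
  rw [mul_assoc, h.PP_shift n i hn hi, ← mul_assoc, h.DD_shift n i hn hi, mul_assoc]

theorem Br.PD_comm (h : Br s m) (n i : ℕ) (hn : n ≤ m) (hi : i + 1 < n) :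
    Commute (PP s n * DD s n) (s (i+1)) := by
  show _ * _ = _ * _
  rw [mul_assoc, h.DD_shift n i hn hi, ← mul_assoc, h.PP_shift n i hn hi, mul_assoc]

theorem Br.PP_pow_eq_DD_pow (h : Br s m) (n : ℕ) (hn : n ≤ m) :
    PP s n ^ (n+1) = DD s n ^ (n+1) := by
  induction n with
  | zero => simp [PP, DD]
  | succ n ih =>
    rw [h.PP_pow n hn, h.DD_pow n hn, ← ih (by omega)]
    have : Commute (DD s (n+1) * PP s (n+1)) (PP s n) :=
      Commute.PP_right n fun i hi => h.DP_comm (n+1) i hn (by omega)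
    exact (this.pow_right (n+1)).eq.symm

theorem PD_one (hs : ∀ i < m, s i * s i = 1) (k : ℕ) (hk : k ≤ m) : PP s k * DD s k = 1 := by
  induction k with
  | zero => simp [PP, DD]
  | succ k ih =>
    simp only [PP, DD]
    rw [mul_assoc, ← mul_assoc (s k), hs k (by omega), one_mul, ih (by omega)]

theorem Br.PP_pow_one (h : Br s m) (hs : ∀ i < m, s i * s i = 1) (n : ℕ) (hn : n ≤ m) :
    PP s n ^ (n+1) = 1 := by
  induction n with
  | zero => simp [PP]
  | succ n ih =>
    rw [h.PP_pow n hn, ih (by omega), one_mul]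
    exact mul_eq_one_comm.mp (PD_one hs _ hn)

/-- the elements `a_j` -/
def aa (s : ℕ → G) (m j : ℕ) : G := (PP s j)⁻¹ * (PP s m * DD s m)⁻¹ * PP s j

theorem aa_succ (s : ℕ → G) (m j : ℕ) : s j * aa s m (j+1) = aa s m j * s j := by
  simp only [aa, PP, mul_inv_rev]; group

theorem Br.aa_comm_lt (h : Br s m) (j i : ℕ) (hj : j ≤ m) (hi : i + 1 < j) :
    Commute (aa s m j) (s i) := by
  have h1 := h.PP_shift j i hj hi
  have h2 : (PP s m * DD s m)⁻¹ * s (i+1) = s (i+1) * (PP s m * DD s m)⁻¹ :=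
    (h.PD_comm m i le_rfl (by omega)).inv_left
  have h3 : (PP s j)⁻¹ * s (i+1) = s i * (PP s j)⁻¹ := by
    rw [inv_mul_eq_iff_eq_mul, ← mul_assoc, h1]; simp
  show _ * _ = _ * _
  rw [aa, mul_assoc, h1, mul_assoc, ← mul_assoc _ (s (i+1)), h2, mul_assoc, ← mul_assoc, h3]
  simp only [mul_assoc]

theorem Br.aa_comm_gt (h : Br s m) (j i : ℕ) (hj : j < i) (hi : i < m) :
    Commute (aa s m j) (s i) := by
  obtain ⟨i, rfl⟩ : ∃ k, i = k + 1 := ⟨i - 1, by omega⟩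
  have h1 : Commute (PP s j) (s (i+1)) := h.PP_comm j (i+1) hj hi
  exact (h1.inv_left.mul_left (h.PD_comm m i le_rfl hi).inv_left).mul_left h1

theorem Br.aa_four (h : Br s m) (j : ℕ) (hj : j < m) :
    s j * aa s m j * s j * aa s m j = aa s m j * s j * aa s m j * s j := by
  induction j with
  | zero =>
    obtain ⟨n, rfl⟩ : ∃ n, m = n + 1 := ⟨m - 1, by omega⟩
    have key : ∀ k ≤ n, Commute (PP s (n+1) * DD s (n+1)) ((s 0)⁻¹ * PP s (k+1)) := by
      intro k
      induction k with
      | zero => intro _; simp [PP]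
      | succ k ih =>
        intro hk
        have := (ih (by omega)).mul_right (h.PD_comm (n+1) k le_rfl (by omega))
        rwa [mul_assoc] at this
    have key' : ∀ k ≤ n, Commute (PP s (n+1) * DD s (n+1)) (DD s (k+1) * (s 0)⁻¹) := by
      intro k
      induction k with
      | zero => intro _; simp [DD]
      | succ k ih =>
        intro hk
        have := (h.PD_comm (n+1) k le_rfl (by omega)).mul_right (ih (by omega))
        rwa [← mul_assoc] at this
    have k3 := ((key n le_rfl).mul_right (key' n le_rfl)).eq
    simp only [aa, PP.eq_1, inv_one, one_mul, mul_one]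
    have e : (s 0)⁻¹ * PP s (n+1) * (DD s (n+1) * (s 0)⁻¹)
      = (s 0)⁻¹ * (PP s (n+1) * DD s (n+1)) * (s 0)⁻¹ := by group
    rw [e] at k3
    generalize PP s (n+1) * DD s (n+1) = x at k3 ⊢
    generalize s 0 = y at k3 ⊢
    -- x y⁻¹ x y⁻¹ = y⁻¹ x y⁻¹ x
    have := congrArg (·⁻¹) k3
    simpa [mul_assoc] using this
  | succ j ih =>
    have ih := ih (by omega)
    have hb := h.braid j hj
    have hc : aa s m j * s (j+1) = s (j+1) * aa s m j := h.aa_comm_gt j (j+1) (by omega) hj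
    have e1 : aa s m (j+1) = (s (j+1) * s j)⁻¹ * aa s m j * (s (j+1) * s j) := by
      rw [mul_assoc _ (aa s m j), ← mul_assoc (aa s m j), hc, eq_inv_mul_iff_mul_eq, mul_assoc,
        aa_succ, mul_assoc]
    have e2 : s (j+1) = (s (j+1) * s j)⁻¹ * s j * (s (j+1) * s j) := by
      rw [mul_assoc, eq_inv_mul_iff_mul_eq, ← mul_assoc, hb]
    rw [e1]
    generalize s (j+1) * s j = x at *
    rw [e2]
    have : x⁻¹ * (s j * aa s m j * s j * aa s m j) * x
      = x⁻¹ * (aa s m j * s j * aa s m j * s j) * x := by rw [ih]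
    simpa [mul_assoc] using this

end BraidAux
section Monomial

variable {G : Type*} [Group G]

/-- The monomial action of the `i`-th generator on `ℕ × G`. -/
def TT (s : ℕ → G) (m i : ℕ) : Equiv.Perm (ℕ × G) where
  toFun x :=
    if m + 1 < x.1 ∨ m < i then x
    else if x.1 < i then (x.1, s (i-1) * x.2)
    else if x.1 = i then (i+1, aa s m i * x.2)
    else if x.1 = i+1 then (i, x.2)
    else (x.1, s i * x.2)
  invFun x :=
    if m + 1 < x.1 ∨ m < i then x
    else if x.1 < i then (x.1, (s (i-1))⁻¹ * x.2)
    else if x.1 = i then (i+1, x.2)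
    else if x.1 = i+1 then (i, (aa s m i)⁻¹ * x.2)
    else (x.1, (s i)⁻¹ * x.2)
  left_inv := by
    rintro ⟨j, h⟩
    by_cases c0 : m + 1 < j ∨ m < i
    · simp [c0]
    rcases lt_trichotomy j i with c | rfl | c
    · simp [c0, c]
    · have : ¬ (m < j) := by omega
      have h2 : ¬ (m + 1 < j) := by omega
      simp [this, h2]
    · by_cases c1 : j = i + 1
      · subst c1
        have : ¬ (m < i) := by omega
        have h2 : ¬ (m + 1 < i) := by omega
        simp [this, h2]
      · simp [c0, c.not_gt, c.ne', c1]
  right_inv := by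
    rintro ⟨j, h⟩
    by_cases c0 : m + 1 < j ∨ m < i
    · simp [c0]
    rcases lt_trichotomy j i with c | rfl | c
    · simp [c0, c]
    · have : ¬ (m < j) := by omega
      have h2 : ¬ (m + 1 < j) := by omega
      simp [this, h2]
    · by_cases c1 : j = i + 1
      · subst c1
        have : ¬ (m < i) := by omega
        have h2 : ¬ (m + 1 < i) := by omega
        simp [this, h2]
      · simp [c0, c.not_gt, c.ne', c1]

variable (s : ℕ → G) (m : ℕ)

theorem TT_out (i j : ℕ) (h : G) (hj : m + 1 < j) : TT s m i (j, h) = (j, h) := by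
  simp [TT, hj]

theorem TT_lt (i j : ℕ) (h : G) (hi : i ≤ m) (hj : j < i) :
    TT s m i (j, h) = (j, s (i-1) * h) := by
  have : ¬ (m + 1 < j ∨ m < i) := by omega
  simp [TT, this, hj]

theorem TT_eq (i : ℕ) (h : G) (hi : i ≤ m) :
    TT s m i (i, h) = (i+1, aa s m i * h) := by
  have : ¬ (m + 1 < i ∨ m < i) := by omega
  simp [TT, this]

theorem TT_succ (i : ℕ) (h : G) (hi : i ≤ m) :
    TT s m i (i+1, h) = (i, h) := by
  have : ¬ (m < i) := by omega
  simp [TT, this]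

theorem TT_gt (i j : ℕ) (h : G) (hi : i + 1 < j) (hj : j ≤ m + 1) :
    TT s m i (j, h) = (j, s i * h) := by
  have : ¬ (m + 1 < j ∨ m < i) := by omega
  have h2 : ¬ j < i := by omega
  have h3 : ¬ j = i := by omega
  have h4 : ¬ j = i + 1 := by omega
  simp [TT, this, h2, h3, h4]

variable {s m}

theorem TT_br (hs : Br s m) : Br (TT s m) (m+1) where
  comm i k hik hk := by
    ext1 ⟨j, h⟩
    simp only [Equiv.Perm.mul_apply]
    rcases Nat.lt_or_ge (m+1) j with c | c
    · simp only [TT_out s m _ _ _ c]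
    rcases lt_trichotomy j i with c1 | rfl | c1
    · rw [TT_lt s m k j h (by omega) (by omega), TT_lt s m i j _ (by omega) (by omega),
        TT_lt s m i j h (by omega) (by omega), TT_lt s m k j _ (by omega) (by omega),
        ← mul_assoc, ← mul_assoc, hs.comm (i-1) (k-1) (by omega) (by omega)]
    · rw [TT_lt s m k j h (by omega) (by omega), TT_eq s m j _ (by omega),
        TT_eq s m j _ (by omega), TT_lt s m k (j+1) _ (by omega) (by omega),
        ← mul_assoc, ← mul_assoc, (hs.aa_comm_gt j (k-1) (by omega) (by omega)).eq]
    rcases eq_or_ne j (i+1) with rfl | c2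
    · rw [TT_lt s m k (i+1) h (by omega) (by omega), TT_succ s m i _ (by omega),
        TT_succ s m i _ (by omega), TT_lt s m k i _ (by omega) (by omega)]
    rw [TT_gt s m i j h (by omega) (by omega)]
    rcases lt_trichotomy j k with c3 | rfl | c3
    · rw [TT_lt s m k j h (by omega) (by omega), TT_lt s m k j _ (by omega) (by omega),
        TT_gt s m i j _ (by omega) (by omega),
        ← mul_assoc, ← mul_assoc, hs.comm i (k-1) (by omega) (by omega)]
    · rw [TT_eq s m j _ (by omega), TT_eq s m j _ (by omega),
        TT_gt s m i (j+1) _ (by omega) (by omega),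
        ← mul_assoc, ← mul_assoc, (hs.aa_comm_lt j i (by omega) (by omega)).eq]
    rcases eq_or_ne j (k+1) with rfl | c4
    · rw [TT_succ s m k _ (by omega), TT_succ s m k _ (by omega),
        TT_gt s m i k _ (by omega) (by omega)]
    · rw [TT_gt s m k j _ (by omega) (by omega), TT_gt s m k j _ (by omega) (by omega),
        TT_gt s m i j _ (by omega) (by omega),
        ← mul_assoc, ← mul_assoc, hs.comm i k (by omega) (by omega)]
  braid i hi := by
    ext1 ⟨j, h⟩
    simp only [Equiv.Perm.mul_apply]
    rcases Nat.lt_or_ge (m+1) j with c | c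
    · simp only [TT_out s m _ _ _ c]
    rcases lt_trichotomy j i with c1 | rfl | c1
    · obtain ⟨i, rfl⟩ : ∃ k, i = k + 1 := ⟨i - 1, by omega⟩
      have e1 : ∀ x, TT s m (i+1) (j, x) = (j, s i * x) := fun x =>
        TT_lt s m _ _ _ (by omega) (by omega)
      have e2 : ∀ x, TT s m (i+1+1) (j, x) = (j, s (i+1) * x) := fun x =>
        TT_lt s m _ _ _ (by omega) (by omega)
      simp only [e1, e2]
      simp only [← mul_assoc, hs.braid i (by omega)]
    · rw [TT_eq s m j _ (by omega), TT_eq s m (j+1) _ (by omega),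
        TT_gt s m j (j+1+1) _ (by omega) (by omega),
        TT_lt s m (j+1) j _ (by omega) (by omega), TT_eq s m j _ (by omega),
        TT_eq s m (j+1) _ (by omega)]
      have h4 := hs.aa_four j (by omega)
      have h5 := aa_succ s m j
      have h6 : aa s m (j+1) = (s j)⁻¹ * (aa s m j * s j) := by rw [← h5]; simp
      have : s j * (aa s m (j+1) * aa s m j) = aa s m (j+1) * (aa s m j * s j) := by
        rw [← mul_assoc, h5, h6, mul_assoc, mul_assoc, eq_inv_mul_iff_mul_eq]
        simpa [mul_assoc] using h4
      rw [Nat.add_sub_cancel]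
      congr 1
      rw [← mul_assoc (aa s m (j+1)), ← mul_assoc, this]
      simp only [mul_assoc]
    rcases eq_or_ne j (i+1) with rfl | c2
    · rw [TT_succ s m i _ (by omega), TT_lt s m (i+1) i _ (by omega) (by omega),
        TT_eq s m i _ (by omega), TT_eq s m (i+1) _ (by omega),
        TT_gt s m i (i+1+1) _ (by omega) (by omega), TT_succ s m (i+1) _ (by omega),
        Nat.add_sub_cancel, ← mul_assoc, ← mul_assoc, aa_succ]
    rcases eq_or_ne j (i+1+1) with rfl | c3
    · rw [TT_gt s m i (i+1+1) _ (by omega) (by omega), TT_succ s m (i+1) _ (by omega),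
        TT_succ s m i _ (by omega), TT_succ s m (i+1) _ (by omega),
        TT_succ s m i _ (by omega), TT_lt s m (i+1) i _ (by omega) (by omega),
        Nat.add_sub_cancel]
    · have e1 : ∀ x, TT s m i (j, x) = (j, s i * x) := fun x =>
        TT_gt s m _ _ _ (by omega) (by omega)
      have e2 : ∀ x, TT s m (i+1) (j, x) = (j, s (i+1) * x) := fun x =>
        TT_gt s m _ _ _ (by omega) (by omega)
      simp only [e1, e2]
      simp only [← mul_assoc, hs.braid i (by omega)]

theorem TT_DD_lt (k j : ℕ) (h : G) (hk : k < j) (hj : j ≤ m + 1) :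
    DD (TT s m) k (j, h) = (j, DD s k * h) := by
  induction k with
  | zero => simp [DD]
  | succ k ih =>
    simp only [DD, Equiv.Perm.mul_apply]
    rw [ih (by omega), TT_gt s m k j _ (by omega) (by omega), mul_assoc]

theorem TT_DD_ge (k j : ℕ) (h : G) (hk : j ≤ k) (hm : k ≤ m) :
    DD (TT s m) (k+1) (j+1, h) = (j, DD s k * h) := by
  induction k with
  | zero =>
    obtain rfl : j = 0 := by omega
    simp only [DD, mul_one, one_mul]
    rw [TT_succ s m 0 _ (by omega)]
  | succ k ih =>
    rw [show DD (TT s m) (k+1+1) = TT s m (k+1) * DD (TT s m) (k+1) from rfl,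
      Equiv.Perm.mul_apply]
    rcases Nat.lt_or_ge k j with c | c
    · obtain rfl : j = k + 1 := by omega
      rw [TT_DD_lt _ _ _ (by omega) (by omega), TT_succ s m _ _ (by omega)]
    · rw [ih c (by omega), TT_lt s m _ _ _ (by omega) (by omega), Nat.add_sub_cancel, ← mul_assoc]
      rfl

theorem TT_DD_zero (k : ℕ) (hk : k ≤ m + 1) :
    ∃ A : G, ∀ h, DD (TT s m) k (0, h) = (k, A * h) := by
  induction k with
  | zero => exact ⟨1, fun h => by simp [DD]⟩
  | succ k ih =>
    obtain ⟨A, hA⟩ := ih (by omega)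
    refine ⟨aa s m k * A, fun h => ?_⟩
    simp only [DD, Equiv.Perm.mul_apply]
    rw [hA, TT_eq s m k _ (by omega), mul_assoc]

theorem TT_PP_lt (k j : ℕ) (h : G) (hk : k < j) (hj : j ≤ m + 1) :
    PP (TT s m) k (j, h) = (j, PP s k * h) := by
  induction k generalizing h with
  | zero => simp [PP]
  | succ k ih =>
    simp only [PP, Equiv.Perm.mul_apply]
    rw [TT_gt s m k j _ (by omega) (by omega), ih _ (by omega), mul_assoc]

theorem TT_PP_eq (j : ℕ) (h : G) (hj : j ≤ m + 1) :
    PP (TT s m) j (j, h) = (0, h) := by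
  induction j with
  | zero => simp [PP]
  | succ j ih =>
    simp only [PP, Equiv.Perm.mul_apply]
    rw [TT_succ s m _ _ (by omega), ih (by omega)]

theorem TT_PP_gt (k j : ℕ) (h : G) (hk : j ≤ k) (hm : k ≤ m) :
    PP (TT s m) (k+1) (j, h) = (j+1, (PP s m * DD s m)⁻¹ * PP s k * h) := by
  induction k generalizing h with
  | zero =>
    obtain rfl : j = 0 := by omega
    simp only [PP, one_mul, mul_one]
    rw [TT_eq s m 0 _ (by omega)]
    simp [aa, PP]
  | succ k ih =>
    rw [show PP (TT s m) (k+1+1) = PP (TT s m) (k+1) * TT s m (k+1) from rfl,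
      Equiv.Perm.mul_apply]
    rcases Nat.lt_or_ge k j with c | c
    · obtain rfl : j = k + 1 := by omega
      rw [TT_eq s m _ _ (by omega), TT_PP_lt _ _ _ (by omega) (by omega)]
      simp only [aa, mul_assoc, mul_inv_cancel_left]
    · rw [TT_lt s m _ _ _ (by omega) (by omega), ih _ c (by omega), Nat.add_sub_cancel]
      simp only [PP, mul_assoc]

theorem TT_W (j : ℕ) (h : G) (hj : j ≤ m) :
    PP (TT s m) (m+1) (j, h) = (j+1, (DD s m)⁻¹ * h) := by
  rw [TT_PP_gt m j h hj le_rfl]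
  simp

theorem TT_fix_PP (k j : ℕ) (h : G) (hj : m + 1 < j) : PP (TT s m) k (j, h) = (j, h) := by
  induction k with
  | zero => simp [PP]
  | succ k ih => simp only [PP, Equiv.Perm.mul_apply]; rw [TT_out s m _ _ _ hj, ih]

theorem TT_fix_DD (k j : ℕ) (h : G) (hj : m + 1 < j) : DD (TT s m) k (j, h) = (j, h) := by
  induction k with
  | zero => simp [DD]
  | succ k ih => simp only [DD, Equiv.Perm.mul_apply]; rw [ih, TT_out s m _ _ _ hj]

theorem TT_W_pow (j : ℕ) (h : G) (hj : j ≤ m + 1) :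
    (PP (TT s m) (m+1) ^ (j+1)) (m+1, h) = (j, (DD s m)⁻¹ ^ j * h) := by
  induction j with
  | zero => simp [TT_PP_eq]
  | succ j ih =>
    rw [pow_succ', Equiv.Perm.mul_apply, ih (by omega), TT_W _ _ (by omega), pow_succ', mul_assoc]

theorem TT_W_pow_one (hs : Br s m) (h1 : PP s m ^ (m+1) = 1) :
    PP (TT s m) (m+1) ^ (m+2) = 1 := by
  have hD : DD s m ^ (m+1) = 1 := by rw [← hs.PP_pow_eq_DD_pow m le_rfl, h1]
  have base : ∀ h, (PP (TT s m) (m+1) ^ (m+2)) (m+1, h) = (m+1, h) := by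
    intro h
    rw [TT_W_pow (m+1) h le_rfl, inv_pow, hD]; simp
  ext1 ⟨j, h⟩
  rcases Nat.lt_or_ge (m+1) j with c | c
  · have : ∀ k : ℕ, (PP (TT s m) (m+1) ^ k) (j, h) = (j, h) := by
      intro k
      induction k with
      | zero => simp
      | succ k ih => rw [pow_succ, Equiv.Perm.mul_apply, TT_fix_PP _ _ _ c, ih]
    simp [this]
  · have e : (j, h) = (PP (TT s m) (m+1) ^ (j+1)) (m+1, DD s m ^ j * h) := by
      rw [TT_W_pow j _ c]; simp
    rw [e, ← Equiv.Perm.mul_apply, pow_mul_comm, Equiv.Perm.mul_apply, base]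
    simp

theorem TT_WD (hs : Br s m) (h1 : PP s m ^ (m+1) = 1) :
    PP (TT s m) (m+1) * DD (TT s m) (m+1) = 1 := by
  obtain ⟨A, hA⟩ := TT_DD_zero (s := s) (m := m) (m+1) le_rfl
  have hA1 : A = 1 := by
    have e := congrArg (fun f : Equiv.Perm (ℕ × G) => f (m+1, 1)) ((TT_br hs).PP_pow m le_rfl)
    simp only [TT_W_pow_one hs h1, Equiv.Perm.mul_apply, TT_PP_eq (m+1) _ le_rfl, hA] at e
    have : ∀ (k : ℕ) (h : G), (PP (TT s m) m ^ k) (m+1, h) = (m+1, PP s m ^ k * h) := by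
      intro k
      induction k with
      | zero => simp
      | succ k ih =>
        intro h
        rw [pow_succ, Equiv.Perm.mul_apply, TT_PP_lt _ _ _ (by omega) le_rfl, ih, pow_succ,
          mul_assoc]
    rw [this, h1] at e
    simpa using e.symm
  ext1 ⟨j, h⟩
  rw [Equiv.Perm.mul_apply]
  rcases Nat.lt_or_ge (m+1) j with c | c
  · rw [TT_fix_DD _ _ _ c, TT_fix_PP _ _ _ c]; rfl
  rcases j with _ | j
  · rw [hA, TT_PP_eq _ _ le_rfl, hA1]; simp
  · rw [TT_DD_ge m j h (by omega) le_rfl, TT_W _ _ (by omega)]; simp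

end Monomial
section Lifts

theorem Br.rep {G : Type*} [Group G] {s : ℕ → G} {m : ℕ} (h : Br s (m+1))
    (h1 : PP s (m+1) * DD s (m+1) = 1) (i : ℕ) (hi : i ≤ m) :
    s i * ((PP s i)⁻¹ * PP s (m+1)) = (PP s (i+1))⁻¹ * PP s (m+1) * aa s m i := by
  have e1 := h.PP_PP (m+1) i le_rfl (by omega)
  have e2 := h.PP_PP (m+1) m le_rfl (by omega)
  have e3 := h.PP_PP (i+1) i (by omega) (by omega)
  have e4 : s i = (PP s i)⁻¹ * PP s (i+1) := by simp [PP]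
  have e5 : s m = (PP s m)⁻¹ * PP s (m+1) := by simp [PP]
  have e6 : (DD s m)⁻¹ = PP s (m+1) * s m := by
    rw [inv_eq_iff_mul_eq_one, ← mul_eq_one_comm, mul_assoc]; exact h1
  have e7 : (PP s m * DD s m)⁻¹ = PP s (m+1) * (PP s m)⁻¹ * (PP s (m+1) * (PP s m)⁻¹) := by
    rw [mul_inv_rev, e6, e5]; group
  rw [aa, e7]
  rw [e4]
  generalize PP s (m+1) = W at *
  generalize PP s m = P at *
  generalize PP s (i+1) = Q at *
  generalize PP s i = R at *
  generalize s 0 = x at *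
  have f2 : W * P⁻¹ = W⁻¹ * x * W := by
    rw [mul_inv_eq_iff_eq_mul, mul_assoc, mul_assoc, eq_inv_mul_iff_mul_eq, ← mul_assoc, e2]
  have f3 : Q * R⁻¹ = Q⁻¹ * x * Q := by
    rw [mul_inv_eq_iff_eq_mul, mul_assoc, mul_assoc, eq_inv_mul_iff_mul_eq, ← mul_assoc, e3]
  have f1 : W * R = x⁻¹ * Q * W := by
    rw [mul_assoc, eq_inv_mul_iff_mul_eq, ← mul_assoc, e1]
  have f1' : R = W⁻¹ * x⁻¹ * Q * W := by
    rw [mul_assoc, mul_assoc, eq_inv_mul_iff_mul_eq, f1, mul_assoc]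
  have l : R⁻¹ * Q * (R⁻¹ * W) = Q⁻¹ * (Q * R⁻¹) * (Q * R⁻¹) * W := by group
  rw [l, f3, f2, f1']
  group

variable {H : Type*} [Group H]

theorem liftGA (g : ℕ) (s : ℕ → H) (hs : Br s (g-1)) (h1 : PP s (g-1) ^ g = 1) :
    ∃ φ : GA g →* H, ∀ i : Fin (g-1), φ (PresentedGroup.of i) = s i := by
  have key : ∀ r ∈ relsA g, FreeGroup.lift (fun i : Fin (g-1) => s i) r = 1 := by
    intro r hr
    rcases hr with (⟨j, k, hjk, rfl⟩ | ⟨j, k, hjk, rfl⟩) | hr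
    · simp only [map_mul, map_inv, FreeGroup.lift_apply_of]
      rw [mul_inv_eq_one]
      rcases hjk with h | h
      · exact (hs.comm j k h k.2).symm
      · exact hs.comm k j h j.2
    · simp only [map_mul, map_inv, FreeGroup.lift_apply_of]
      rw [mul_inv_eq_one, ← hjk]
      exact hs.braid j (hjk ▸ k.2)
    · rw [Set.mem_singleton_iff] at hr
      subst hr
      rw [map_pow, map_list_prod, List.map_ofFn]
      have : (⇑(FreeGroup.lift (fun i : Fin (g-1) => s i)) ∘ fun i => FreeGroup.of i)
        = fun i : Fin (g-1) => s i := by ext i; simp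
      rw [this, ofFn_prod, h1]
  exact ⟨(PresentedGroup.toGroup key : PresentedGroup (relsA g) →* H),
    fun i => PresentedGroup.toGroup.of key⟩

theorem liftGM (g : ℕ) (s : ℕ → H) (hs : Br s g) (h1 : PP s g * DD s g = 1)
    (h2 : PP s g ^ (g+1) = 1) :
    ∃ φ : GM g →* H, ∀ i : Fin g, φ (PresentedGroup.of i) = s i := by
  have key : ∀ r ∈ relsM g, FreeGroup.lift (fun i : Fin g => s i) r = 1 := by
    intro r hr
    have e : (⇑(FreeGroup.lift (fun i : Fin g => s i)) ∘ fun i => FreeGroup.of i)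
        = fun i : Fin g => s i := by ext i; simp
    rcases hr with ((⟨j, k, hjk, rfl⟩ | ⟨j, k, hjk, rfl⟩) | hr) | hr
    · simp only [map_mul, map_inv, FreeGroup.lift_apply_of]
      rw [mul_inv_eq_one]
      rcases hjk with h | h
      · exact (hs.comm j k h k.2).symm
      · exact hs.comm k j h j.2
    · simp only [map_mul, map_inv, FreeGroup.lift_apply_of]
      rw [mul_inv_eq_one, ← hjk]
      exact hs.braid j (hjk ▸ k.2)
    · rw [Set.mem_singleton_iff] at hr
      subst hr
      rw [map_mul, map_list_prod, map_list_prod, List.map_reverse, List.map_ofFn, e, ofFn_prod,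
        ofFn_reverse_prod, h1]
    · rw [Set.mem_singleton_iff] at hr
      subst hr
      rw [map_pow, map_list_prod, List.map_ofFn, e, ofFn_prod, h2]
  exact ⟨(PresentedGroup.toGroup key : PresentedGroup (relsM g) →* H),
    fun i => PresentedGroup.toGroup.of key⟩

/-- projection to `GA` -/
def mkA (g : ℕ) : FreeGroup (Fin (g-1)) →* GA g := PresentedGroup.mk (relsA g)

/-- projection to `GM` -/
def mkM (g : ℕ) : FreeGroup (Fin g) →* GM g := PresentedGroup.mk (relsM g)

theorem mkA_one (g : ℕ) {r} (hr : r ∈ relsA g) : mkA g r = 1 := PresentedGroup.one_of_mem hr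

theorem mkM_one (g : ℕ) {r} (hr : r ∈ relsM g) : mkM g r = 1 := PresentedGroup.one_of_mem hr

/-- extend a finite sequence by `1`. -/
def ext1 {n : ℕ} (u : Fin n → H) (i : ℕ) : H := if h : i < n then u ⟨i, h⟩ else 1

theorem ext1_lt {n : ℕ} (u : Fin n → H) (i : ℕ) (h : i < n) : ext1 u i = u ⟨i, h⟩ := by
  simp [ext1, h]

theorem ext1_fin {n : ℕ} (u : Fin n → H) (i : Fin n) : ext1 u i = u i := by
  simp [ext1]

/-- generators of `GA` -/
def sA (g : ℕ) : ℕ → GA g := ext1 fun i : Fin (g-1) => mkA g (FreeGroup.of i)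

/-- generators of `GM` -/
def sM (g : ℕ) : ℕ → GM g := ext1 fun i : Fin g => mkM g (FreeGroup.of i)

theorem sA_fin (g : ℕ) (i : Fin (g-1)) : sA g i = mkA g (FreeGroup.of i) := ext1_fin _ _

theorem sM_fin (g : ℕ) (i : Fin g) : sM g i = mkM g (FreeGroup.of i) := ext1_fin _ _

theorem sA_br (g : ℕ) : Br (sA g) (g-1) where
  comm i k h1 h2 := by
    have := mkA_one g (Or.inl (Or.inl ⟨⟨i, by omega⟩, ⟨k, h2⟩, Or.inl h1, rfl⟩))
    simp only [map_mul, map_inv, ← sA_fin] at this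
    exact (mul_inv_eq_one.mp this).symm
  braid i h1 := by
    have := mkA_one g (Or.inl (Or.inr ⟨⟨i, by omega⟩, ⟨i+1, h1⟩, rfl, rfl⟩))
    simp only [map_mul, map_inv, ← sA_fin] at this
    exact mul_inv_eq_one.mp this

theorem sM_br (g : ℕ) : Br (sM g) g where
  comm i k h1 h2 := by
    have := mkM_one g (Or.inl (Or.inl (Or.inl ⟨⟨i, by omega⟩, ⟨k, h2⟩, Or.inl h1, rfl⟩)))
    simp only [map_mul, map_inv, ← sM_fin] at this
    exact (mul_inv_eq_one.mp this).symm
  braid i h1 := by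
    have := mkM_one g (Or.inl (Or.inl (Or.inr ⟨⟨i, by omega⟩, ⟨i+1, h1⟩, rfl, rfl⟩)))
    simp only [map_mul, map_inv, ← sM_fin] at this
    exact mul_inv_eq_one.mp this

theorem sA_pow (g : ℕ) : PP (sA g) (g-1) ^ g = 1 := by
  have := mkA_one g (Or.inr rfl)
  rw [map_pow, map_list_prod, List.map_ofFn] at this
  rw [← ofFn_prod, ← this]
  congr; ext i; exact sA_fin g i

theorem sM_fun (g : ℕ) : (⇑(mkM g) ∘ fun i => FreeGroup.of i) = fun i : Fin g => sM g i := by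
  ext i; exact (sM_fin g i).symm

theorem sM_pow (g : ℕ) : PP (sM g) g ^ (g+1) = 1 := by
  have := mkM_one g (Or.inr rfl)
  rwa [map_pow, map_list_prod, List.map_ofFn, sM_fun, ofFn_prod] at this

theorem sM_PD (g : ℕ) : PP (sM g) g * DD (sM g) g = 1 := by
  have := mkM_one g (Or.inl (Or.inr rfl))
  rwa [map_mul, map_list_prod, map_list_prod, List.map_reverse, List.map_ofFn, sM_fun, ofFn_prod,
    ofFn_reverse_prod] at this

theorem closA (g : ℕ) (K : Subgroup (GA g)) (h : ∀ i < g-1, sA g i ∈ K) (x : GA g) : x ∈ K := by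
  obtain ⟨y, rfl⟩ : ∃ y, mkA g y = x := PresentedGroup.mk_surjective (relsA g) x
  have : (⊤ : Subgroup _) ≤ K.comap (mkA g) := by
    rw [← FreeGroup.closure_range_of, Subgroup.closure_le]
    rintro _ ⟨i, rfl⟩
    have := h i i.2
    rwa [sA_fin] at this
  exact this (Subgroup.mem_top y)

theorem closM (g : ℕ) (K : Subgroup (GM g)) (h : ∀ i < g, sM g i ∈ K) (x : GM g) : x ∈ K := by
  obtain ⟨y, rfl⟩ : ∃ y, mkM g y = x := PresentedGroup.mk_surjective (relsM g) x
  have : (⊤ : Subgroup _) ≤ K.comap (mkM g) := by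
    rw [← FreeGroup.closure_range_of, Subgroup.closure_le]
    rintro _ ⟨i, rfl⟩
    have := h i i.2
    rwa [sM_fin] at this
  exact this (Subgroup.mem_top y)

end Lifts

section Swaps

/-- transposition `(i, i+1)` -/
def sw (g : ℕ) : ℕ → Equiv.Perm (Fin (g+1)) := ext1 fun i : Fin g => Equiv.swap i.castSucc i.succ

theorem sw_fin (g : ℕ) (i : Fin g) : sw g i = Equiv.swap i.castSucc i.succ := ext1_fin _ _

theorem sw_lt (g i : ℕ) (h : i < g) :
    sw g i = Equiv.swap ⟨i, by omega⟩ ⟨i+1, by omega⟩ := ext1_lt _ _ h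

theorem sw_sq (g i : ℕ) (h : i < g) : sw g i * sw g i = 1 := by
  rw [sw_lt g i h, Equiv.swap_mul_self]

theorem sw_br (g : ℕ) : Br (sw g) g where
  comm i k h1 h2 := by
    rw [sw_lt g i (by omega), sw_lt g k h2]
    apply Equiv.Perm.Disjoint.commute
    rw [Equiv.Perm.disjoint_iff_eq_or_eq]
    intro x
    by_cases hx : (x : ℕ) < k
    · right
      apply Equiv.swap_apply_of_ne_of_ne <;> (intro h; rw [Fin.ext_iff] at h; simp at h; omega)
    · left
      apply Equiv.swap_apply_of_ne_of_ne <;> (intro h; rw [Fin.ext_iff] at h; simp at h; omega)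
  braid i h1 := by
    rw [sw_lt g i (by omega), sw_lt g (i+1) h1]
    have n1 : (⟨i, by omega⟩ : Fin (g+1)) ≠ ⟨i+1, by omega⟩ := by simp
    have n2 : (⟨i, by omega⟩ : Fin (g+1)) ≠ ⟨i+1+1, by omega⟩ := by simp; omega
    have n3 : (⟨i+1, by omega⟩ : Fin (g+1)) ≠ ⟨i+1+1, by omega⟩ := by simp
    generalize (⟨i, by omega⟩ : Fin (g+1)) = a at *
    generalize (⟨i+1, by omega⟩ : Fin (g+1)) = b at *
    generalize (⟨i+1+1, by omega⟩ : Fin (g+1)) = c at *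
    rw [Equiv.swap_mul_swap_mul_swap n1 n2, Equiv.swap_comm a b, Equiv.swap_comm b c,
      Equiv.swap_mul_swap_mul_swap n3.symm n2.symm, Equiv.swap_comm]

end Swaps

/-- There is a homomorphism `p : G_M(g) → Sym({1,…,g+1})` with `p(σ_i) = (i, i+1)`;
for `g ≥ 3` the natural homomorphism `G_A(g) → G_M(g)`, `σ_i ↦ σ_i`, is injective and its
image is exactly `p⁻¹(Stab(g+1))`; in particular this image has index `g+1` in `G_M(g)`. -/
theorem stmt0 (g : ℕ) (hg : 3 ≤ g) :
    ∃ p : GM g →* Equiv.Perm (Fin (g+1)),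
      (∀ i : Fin g, p (PresentedGroup.of i) = Equiv.swap i.castSucc i.succ) ∧
      ∃ f : GA g →* GM g,
        (∀ i : Fin (g-1), f (PresentedGroup.of i)
            = PresentedGroup.of (Fin.castLE (Nat.sub_le g 1) i)) ∧
        Function.Injective f ∧
        (f.range : Set (GM g)) = ⇑p ⁻¹' {q : Equiv.Perm (Fin (g+1)) | q (Fin.last g) = Fin.last g} ∧
        f.range.index = g + 1 := by
  obtain ⟨m, rfl⟩ : ∃ m, g = m + 1 := ⟨g - 1, by omega⟩
  have hA : Br (sA (m+1)) m := sA_br (m+1)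
  have hA1 : PP (sA (m+1)) m ^ (m+1) = 1 := sA_pow (m+1)
  have hM := sM_br (m+1)
  have hM1 := sM_PD (m+1)
  have hM2 := sM_pow (m+1)
  obtain ⟨p, hp⟩ := liftGM (m+1) (sw (m+1)) (sw_br _)
    (PD_one (m := m+1) (fun i hi => sw_sq _ i hi) _ le_rfl)
    ((sw_br _).PP_pow_one (fun i hi => sw_sq _ i hi) _ le_rfl)
  have hfM : PP (sM (m+1)) m ^ (m+1) = 1 := by
    have := hM.PP_pow m le_rfl
    rw [hM2, mul_eq_one_comm.mp hM1, mul_one] at this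
    exact this.symm
  obtain ⟨f, hf⟩ := liftGA (m+1) (sM (m+1)) (hM.mono (by omega)) hfM
  obtain ⟨φ, hφ⟩ := liftGM (m+1) (TT (sA (m+1)) m) (TT_br hA) (TT_WD hA hA1) (TT_W_pow_one hA hA1)
  have hp' : ∀ i < m + 1, p (sM (m+1) i) = sw (m+1) i := fun i hi => by
    have := hp ⟨i, hi⟩
    rw [← this]; exact congrArg p (sM_fin (m+1) ⟨i, hi⟩)
  have hφ' : ∀ i < m + 1, φ (sM (m+1) i) = TT (sA (m+1)) m i := fun i hi => by
    have := hφ ⟨i, hi⟩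
    rw [← this]; exact congrArg φ (sM_fin (m+1) ⟨i, hi⟩)
  have hf' : ∀ i < m, f (sA (m+1) i) = sM (m+1) i := fun i hi => by
    have := hf ⟨i, hi⟩
    rw [← this]; exact congrArg f (sA_fin (m+1) ⟨i, hi⟩)
  have hfa : ∀ i ≤ m, f (aa (sA (m+1)) m i) = aa (sM (m+1)) m i := fun i hi => by
    simp only [aa, map_mul, map_inv, PP_map, DD_map]
    rw [PP_congr (k := i) fun k hk => hf' k (by omega), PP_congr (k := m) fun k hk => hf' k hk,
      DD_congr fun k hk => hf' k hk]
  generalize hsA : sA (m+1) = a at *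
  generalize hsM : sM (m+1) = s at *
  -- F1
  have F1 : ∀ x h, φ (f x) (m+1, h) = (m+1, x * h) := by
    intro x
    let K : Subgroup (GA (m+1)) :=
      { carrier := {x | ∀ h, φ (f x) (m+1, h) = (m+1, x * h)}
        one_mem' := by intro h; simp
        mul_mem' := by
          intro x y hx hy h
          rw [map_mul, map_mul, Equiv.Perm.mul_apply, hy, hx, mul_assoc]
        inv_mem' := by
          intro x hx h
          rw [map_inv, map_inv, Equiv.Perm.inv_eq_iff_eq, hx]; simp }
    refine closA (m+1) K (fun i hi => ?_) x
    intro h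
    have hi : i < m := hi
    rw [hsA, hf' i hi, hφ' i (by omega), TT_gt a m i (m+1) h (by omega) le_rfl]
  -- cocycle
  have F2 : ∀ x : GM (m+1), ∀ j : Fin (m+1+1), ∃ c : GA (m+1),
      (∀ h, φ x ((j : ℕ), h) = ((p x j : ℕ), c * h)) ∧
      x * ((PP s j)⁻¹ * PP s (m+1)) = (PP s (p x j))⁻¹ * PP s (m+1) * f c := by
    intro x
    let K : Subgroup (GM (m+1)) :=
      { carrier := {x | ∀ j : Fin (m+1+1), ∃ c : GA (m+1),
          (∀ h, φ x ((j : ℕ), h) = ((p x j : ℕ), c * h)) ∧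
          x * ((PP s j)⁻¹ * PP s (m+1)) = (PP s (p x j))⁻¹ * PP s (m+1) * f c}
        one_mem' := by intro j; exact ⟨1, by simp⟩
        mul_mem' := by
          intro x y hx hy j
          obtain ⟨c, h1, h2⟩ := hy j
          obtain ⟨d, h3, h4⟩ := hx (p y j)
          refine ⟨d * c, fun h => ?_, ?_⟩
          · rw [map_mul, map_mul, Equiv.Perm.mul_apply, Equiv.Perm.mul_apply, h1, h3, mul_assoc]
          · rw [map_mul, map_mul, Equiv.Perm.mul_apply, mul_assoc, h2, ← mul_assoc, h4, mul_assoc]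
        inv_mem' := by
          intro x hx j
          obtain ⟨c, h1, h2⟩ := hx (p x⁻¹ j)
          have e : p x (p x⁻¹ j) = j := by rw [map_inv]; simp
          rw [e] at h1 h2
          refine ⟨c⁻¹, fun h => ?_, ?_⟩
          · rw [map_inv φ, Equiv.Perm.inv_eq_iff_eq, h1]; simp
          · rw [inv_mul_eq_iff_eq_mul, map_inv f, eq_comm, ← mul_assoc, h2]; simp }
    refine closM (m+1) K (fun i hi => ?_) x
    rw [hsM]
    intro j
    rw [hφ' i hi, hp' i hi, sw_lt (m+1) i hi]
    have hj := j.2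
    rcases lt_trichotomy (j : ℕ) i with c | c | c
    · refine ⟨a (i-1), fun h => ?_, ?_⟩
      · rw [Equiv.swap_apply_of_ne_of_ne (by intro h; simp [Fin.ext_iff] at h; omega)
          (by intro h; simp [Fin.ext_iff] at h; omega), TT_lt a m i j h (by omega) c]
      · rw [Equiv.swap_apply_of_ne_of_ne (by intro h; simp [Fin.ext_iff] at h; omega)
          (by intro h; simp [Fin.ext_iff] at h; omega), hf' _ (by omega)]
        obtain ⟨i, rfl⟩ : ∃ k, i = k + 1 := ⟨i - 1, by omega⟩
        have q1 : Commute (PP s j) (s (i+1)) := hM.PP_comm j (i+1) c hi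
        rw [Nat.add_sub_cancel, mul_assoc, hM.PP_shift (m+1) i le_rfl hi, ← mul_assoc, ← mul_assoc,
          q1.inv_left.eq]
    · obtain rfl : j = ⟨i, Nat.lt_succ_of_lt hi⟩ := Fin.ext c
      refine ⟨aa a m i, fun h => ?_, ?_⟩
      · rw [Equiv.swap_apply_left]
        exact TT_eq a m i h (by omega)
      · rw [Equiv.swap_apply_left, hfa i (by omega)]
        exact hM.rep hM1 i (by omega)
    rcases eq_or_ne (j : ℕ) (i+1) with c2 | c2
    · obtain rfl : j = ⟨i+1, Nat.succ_lt_succ hi⟩ := Fin.ext c2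
      refine ⟨1, fun h => ?_, ?_⟩
      · rw [Equiv.swap_apply_right, one_mul]
        exact TT_succ a m i h (by omega)
      · rw [Equiv.swap_apply_right]
        simp [PP, mul_assoc]
    · refine ⟨a i, fun h => ?_, ?_⟩
      · rw [Equiv.swap_apply_of_ne_of_ne (by intro h; simp [Fin.ext_iff] at h; omega)
          (by intro h; simp [Fin.ext_iff] at h; omega), TT_gt a m i j h (by omega) (by omega)]
      · rw [Equiv.swap_apply_of_ne_of_ne (by intro h; simp [Fin.ext_iff] at h; omega)
          (by intro h; simp [Fin.ext_iff] at h; omega), hf' _ (by omega)]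
        have q1 := hM.PP_shift j i (by omega) (by omega)
        have q2 : (PP s j)⁻¹ * s (i+1) = s i * (PP s j)⁻¹ := by
          rw [inv_mul_eq_iff_eq_mul, ← mul_assoc, q1]; simp
        rw [mul_assoc, hM.PP_shift (m+1) i le_rfl (by omega), ← mul_assoc, ← mul_assoc, q2]
  have hrange : (f.range : Set (GM (m+1))) =
      ⇑p ⁻¹' {q : Equiv.Perm (Fin (m+1+1)) | q (Fin.last (m+1)) = Fin.last (m+1)} := by
    ext x
    simp only [SetLike.mem_coe, MonoidHom.mem_range, Set.mem_preimage, Set.mem_setOf_eq]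
    constructor
    · rintro ⟨y, rfl⟩
      obtain ⟨c, h1, -⟩ := F2 (f y) (Fin.last (m+1))
      have := h1 1
      rw [Fin.val_last, F1] at this
      exact Fin.ext (congrArg Prod.fst this).symm
    · intro hx
      obtain ⟨c, -, h2⟩ := F2 x (Fin.last (m+1))
      rw [hx, Fin.val_last] at h2
      exact ⟨c, by simpa using h2.symm⟩
  refine ⟨p, fun i => (hp i).trans (sw_fin _ i), f, fun i => (hf i).trans ?_, ?_, hrange, ?_⟩
  · rw [← hsM]
    exact sM_fin (m+1) (Fin.castLE (Nat.sub_le (m+1) 1) i)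
  · intro x y hxy
    have h1 := F1 x 1
    rw [hxy, F1 y 1] at h1
    simpa using (congrArg Prod.snd h1).symm
  · letI : MulAction (GM (m+1)) (Fin (m+1+1)) := MulAction.compHom _ p
    have hs : f.range = MulAction.stabilizer (GM (m+1)) (Fin.last (m+1)) := by
      apply SetLike.coe_injective
      rw [hrange]; rfl
    have ho : MulAction.orbit (GM (m+1)) (Fin.last (m+1)) = Set.univ := by
      rw [Set.eq_univ_iff_forall]
      intro j
      induction j using Fin.reverseInduction with
      | last => exact MulAction.mem_orbit_self _
      | cast i ih =>
        have : i.castSucc = s i • i.succ := by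
          show _ = p (s i) i.succ
          rw [hp' i i.2, sw_fin, Equiv.swap_apply_right]
        rw [this]
        exact (MulAction.mem_orbit_of_mem_orbit _ ih)
    rw [hs, MulAction.index_stabilizer, ho, Set.ncard_univ, Nat.card_eq_fintype_card,
      Fintype.card_fin]
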